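/- Fubini for products of arbitrary measures: Let μ, ν be measures on σ-rings 𝔖, 𝔗 and μ⊗ν their product (equal to μ^σ⊗ν^σ on σ-finite sets, ∞ elsewhere). For any μ⊗ν-integrable f : S×T → [-∞,∞], the iterated integrals exist, the sections s ↦ f(s,·) are ν-integrable for μ-almost every s (and symmetrically), and ∫ f d(μ⊗ν) = ∫ (∫ f(s,t) dν(t)) dμ(s) = ∫ (∫ f(s,t) dμ(s)) dν(t). -/

import Mathlib

open Set ENNReal

/-- A family of sets is a σ-ring if it contains `∅` and is closed under
set differences and countable unions. -/
def IsSigmaRing {α : Type*} (C : Set (Set α)) : Prop :=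
  ∅ ∈ C ∧ (∀ A B : Set α, A ∈ C → B ∈ C → A \ B ∈ C) ∧
    ∀ f : ℕ → Set α, (∀ n, f n ∈ C) → (⋃ n, f n) ∈ C

/-- The σ-ring generated by a family of sets. -/
def genSR {α : Type*} (D : Set (Set α)) : Set (Set α) :=
  ⋂₀ {C | IsSigmaRing C ∧ D ⊆ C}

/-- A measure on a σ-ring: countably additive, vanishing on `∅`. -/
def IsMeasure {α : Type*} (C : Set (Set α)) (μ : Set α → ℝ≥0∞) : Prop :=
  μ ∅ = 0 ∧ ∀ f : ℕ → Set α, (∀ n, f n ∈ C) →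
    Pairwise (Function.onFun Disjoint f) → μ (⋃ n, f n) = ∑' n, μ (f n)

/-- The family of μ-σ-finite sets: countable unions of sets of finite measure. -/
def sigmaFin {α : Type*} (C : Set (Set α)) (μ : Set α → ℝ≥0∞) : Set (Set α) :=
  {A | ∃ g : ℕ → Set α, (∀ n, g n ∈ C ∧ μ (g n) < ⊤) ∧ A = ⋃ n, g n}

/-- Restriction of a family of sets to a set `S`. -/
def restrictFam {α : Type*} (D : Set (Set α)) (S : Set α) : Set (Set α) :=
  (fun A => A ∩ S) '' D

/-- The product σ-ring, generated by measurable rectangles. -/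
def prodSR {α β : Type*} (S : Set (Set α)) (T : Set (Set β)) : Set (Set (α × β)) :=
  genSR {R | ∃ A ∈ S, ∃ B ∈ T, R = A ×ˢ B}

/-- The σ-algebra generated by a family of sets. -/
def genSA {α : Type*} (D : Set (Set α)) : MeasurableSpace α :=
  MeasurableSpace.generateFrom D

/-- The (extended) Lebesgue integral of a nonnegative function with respect to a
measure on a σ-ring, as the supremum of integrals of simple functions below it. -/
noncomputable def lintSR {α : Type*} (C : Set (Set α)) (μ : Set α → ℝ≥0∞)
    (f : α → ℝ≥0∞) : ℝ≥0∞ :=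
  ⨆ (n : ℕ) (c : Fin n → ℝ≥0∞) (A : Fin n → Set α) (_ : ∀ i, A i ∈ C)
    (_ : ∀ x, (∑ i, (A i).indicator (fun _ => c i) x) ≤ f x),
    ∑ i, c i * μ (A i)

/-- The positive part of an extended real, as an `ℝ≥0∞`. -/
noncomputable def epos (x : EReal) : ℝ≥0∞ := (x ⊔ 0).abs

/-- Measurability of an extended-real function with respect to a σ-ring:
measurable for the generated σ-algebra, with support in the σ-ring. -/
def SRMeasurableE {α : Type*} (C : Set (Set α)) (f : α → EReal) : Prop :=
  @Measurable α EReal (genSA C) _ f ∧ {x | f x ≠ 0} ∈ C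

/-- The Lebesgue integral of an extended-real function w.r.t. a measure on a σ-ring. -/
noncomputable def integralE {α : Type*} (C : Set (Set α)) (μ : Set α → ℝ≥0∞)
    (f : α → EReal) : EReal :=
  ((lintSR C μ fun x => epos (f x) : ℝ≥0∞) : EReal) -
    ((lintSR C μ fun x => epos (-f x) : ℝ≥0∞) : EReal)

/-- Integrability of an extended-real function w.r.t. a measure on a σ-ring. -/
def IntegrableE {α : Type*} (C : Set (Set α)) (μ : Set α → ℝ≥0∞)
    (f : α → EReal) : Prop :=
  SRMeasurableE C f ∧ lintSR C μ (fun x => (f x).abs) < ⊤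

/-- `lam` is the product of the measures `μ` and `ν` on σ-rings `S`, `T`:
the unique measure on the product σ-ring whose σ-finite component is the Halmos
product of the σ-finite components. -/
def IsProdMeasure {α β : Type*} (S : Set (Set α)) (T : Set (Set β))
    (μ : Set α → ℝ≥0∞) (ν : Set β → ℝ≥0∞) (lam : Set (α × β) → ℝ≥0∞) : Prop :=
  IsMeasure (prodSR S T) lam ∧
  (∀ A ∈ S, ∀ B ∈ T, μ A < ⊤ → ν B < ⊤ → lam (A ×ˢ B) = μ A * ν B) ∧
  sigmaFin (prodSR S T) lam =
    genSR {R | ∃ A ∈ S, ∃ B ∈ T, μ A < ⊤ ∧ ν B < ⊤ ∧ R = A ×ˢ B}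

open MeasureTheory

theorem IsSigmaRing.inter {α : Type*} {C : Set (Set α)} (hC : IsSigmaRing C) {A B : Set α}
    (hA : A ∈ C) (hB : B ∈ C) : A ∩ B ∈ C := by
  rw [← sdiff_sdiff_right_self]
  exact hC.2.1 _ _ hA (hC.2.1 _ _ hA hB)

/-- Members of the σ-algebra generated by a σ-ring have traces in the σ-ring. -/
theorem IsSigmaRing.inter_mem_of_measurableSet {α : Type*} {C : Set (Set α)}
    (hC : IsSigmaRing C) {A E : Set α} (hA : A ∈ C) (hE : MeasurableSet[genSA C] E) :
    E ∩ A ∈ C := by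
  induction E, hE using MeasurableSpace.generateFrom_induction with
  | hC E hE _ => exact hC.inter hE hA
  | empty => simpa using hC.1
  | compl E _ ih =>
    have : Eᶜ ∩ A = A \ (E ∩ A) := by ext x; simp; tauto
    rw [this]
    exact hC.2.1 _ _ hA ih
  | iUnion f _ ih =>
    rw [iUnion_inter]
    exact hC.2.2 _ ih

theorem isSigmaRing_genSR {α : Type*} (D : Set (Set α)) : IsSigmaRing (genSR D) :=
  ⟨fun _ h => h.1.1, fun _ _ hA hB _ h => h.1.2.1 _ _ (hA _ h) (hB _ h),
    fun _ hf _ h => h.1.2.2 _ fun n => hf n _ h⟩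

theorem subset_genSR {α : Type*} (D : Set (Set α)) : D ⊆ genSR D :=
  fun _ hA _ h => h.2 hA

theorem isSigmaRing_measurableSet {α : Type*} (m : MeasurableSpace α) :
    IsSigmaRing {E | MeasurableSet[m] E} :=
  ⟨MeasurableSet.empty, fun _ _ hA hB => MeasurableSet.diff hA hB,
    fun _ hf => MeasurableSet.iUnion hf⟩

theorem prod_mem_prodSR {α β : Type*} {S : Set (Set α)} {T : Set (Set β)} {A : Set α} {B : Set β}
    (hA : A ∈ S) (hB : B ∈ T) : A ×ˢ B ∈ prodSR S T :=
  subset_genSR _ ⟨A, hA, B, hB, rfl⟩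

theorem measurableSet_prod_of_mem_prodSR {α β : Type*} {S : Set (Set α)} {T : Set (Set β)}
    {E : Set (α × β)} (hE : E ∈ prodSR S T) :
    MeasurableSet[(genSA S).prod (genSA T)] E := by
  refine hE {E | MeasurableSet[(genSA S).prod (genSA T)] E}
    ⟨isSigmaRing_measurableSet _, ?_⟩
  rintro _ ⟨A, hA, B, hB, rfl⟩
  exact @MeasurableSet.prod _ _ (genSA S) (genSA T) _ _
    (MeasurableSpace.measurableSet_generateFrom hA) (MeasurableSpace.measurableSet_generateFrom hB)

theorem genSA_prodSR_le {α β : Type*} (S : Set (Set α)) (T : Set (Set β)) :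
    genSA (prodSR S T) ≤ (genSA S).prod (genSA T) :=
  MeasurableSpace.generateFrom_le fun _ => measurableSet_prod_of_mem_prodSR

/-- Sets of the product σ-algebra have traces on measurable rectangles in the product σ-ring. -/
theorem inter_prod_mem_prodSR {α β : Type*} {S : Set (Set α)} {T : Set (Set β)}
    (hS : IsSigmaRing S) (hT : IsSigmaRing T) {A : Set α} {B : Set β} (hA : A ∈ S) (hB : B ∈ T)
    {E : Set (α × β)} (hE : MeasurableSet[(genSA S).prod (genSA T)] E) :
    E ∩ A ×ˢ B ∈ prodSR S T := by
  let _ := genSA S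
  let _ := genSA T
  have hP : IsSigmaRing (prodSR S T) := isSigmaRing_genSR _
  replace hE : MeasurableSet[MeasurableSpace.generateFrom
      (image2 (· ×ˢ ·) {s : Set α | MeasurableSet s} {t : Set β | MeasurableSet t})] E := by
    rw [generateFrom_prod]; exact hE
  induction E, hE using MeasurableSpace.generateFrom_induction with
  | hC E hE _ =>
    obtain ⟨s, hs, t, ht, rfl⟩ := hE
    change s ×ˢ t ∩ A ×ˢ B ∈ prodSR S T
    rw [prod_inter_prod]
    exact prod_mem_prodSR (hS.inter_mem_of_measurableSet hA hs)
      (hT.inter_mem_of_measurableSet hB ht)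
  | empty => simpa using hP.1
  | compl E _ ih =>
    have : Eᶜ ∩ A ×ˢ B = (A ×ˢ B) \ (E ∩ A ×ˢ B) := by ext x; simp; tauto
    rw [this]
    exact hP.2.1 _ _ (prod_mem_prodSR hA hB) ih
  | iUnion f _ ih =>
    rw [iUnion_inter]
    exact hP.2.2 _ ih

/-- The trace on a set `A` of a measure on a σ-ring, as a measure on a σ-algebra
whose members have traces on `A` in the σ-ring. -/
noncomputable def traceMeasure {α : Type*} [MeasurableSpace α] {C : Set (Set α)}
    {μ : Set α → ℝ≥0∞} (hμ : IsMeasure C μ) {A : Set α}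
    (hA : ∀ E, MeasurableSet E → E ∩ A ∈ C) : Measure α :=
  Measure.ofMeasurable (fun E _ => μ (E ∩ A)) (by simpa using hμ.1) fun f hf hd => by
    rw [iUnion_inter]
    exact hμ.2 _ (fun n => hA _ (hf n)) fun i j hij =>
      (hd hij).mono inter_subset_left inter_subset_left

theorem traceMeasure_apply {α : Type*} [MeasurableSpace α] {C : Set (Set α)}
    {μ : Set α → ℝ≥0∞} (hμ : IsMeasure C μ) {A : Set α}
    (hA : ∀ E, MeasurableSet E → E ∩ A ∈ C) {E : Set α} (hE : MeasurableSet E) :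
    traceMeasure hμ hA E = μ (E ∩ A) :=
  Measure.ofMeasurable_apply E hE

theorem sum_le_lintSR {α ι : Type*} {C : Set (Set α)} {μ : Set α → ℝ≥0∞} {h : α → ℝ≥0∞}
    (s : Finset ι) (c : ι → ℝ≥0∞) (A : ι → Set α) (hA : ∀ i, A i ∈ C)
    (hle : ∀ x, ∑ i ∈ s, (A i).indicator (fun _ => c i) x ≤ h x) :
    ∑ i ∈ s, c i * μ (A i) ≤ lintSR C μ h := by
  have key : ∀ g : ι → ℝ≥0∞, ∑ j : Fin s.card, g (s.equivFin.symm j) = ∑ i ∈ s, g i := fun g => by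
    rw [← Finset.sum_coe_sort s, ← s.equivFin.symm.sum_comp]
  rw [← key]
  refine le_iSup_of_le s.card <| le_iSup_of_le (fun j => c (s.equivFin.symm j)) <|
    le_iSup_of_le (fun j => A (s.equivFin.symm j)) <| le_iSup_of_le (fun j => hA _) <|
    le_iSup_of_le (fun x => ?_) le_rfl
  rw [key fun i => (A i).indicator (fun _ => c i) x]
  exact hle x

theorem lintSR_eq_lintegral {α : Type*} [MeasurableSpace α] {C : Set (Set α)}
    {μ : Set α → ℝ≥0∞} (hμ : IsMeasure C μ) {A : Set α}
    (hA : ∀ E, MeasurableSet E → E ∩ A ∈ C) (hC : ∀ E ∈ C, MeasurableSet E)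
    {h : α → ℝ≥0∞} (hsupp : ∀ x ∉ A, h x = 0) :
    lintSR C μ h = ∫⁻ x, h x ∂traceMeasure hμ hA := by
  apply le_antisymm
  · refine iSup_le fun n => iSup_le fun c => iSup_le fun B => iSup_le fun hB => iSup_le fun hle => ?_
    calc ∑ i, c i * μ (B i) = ∑ i, c i * traceMeasure hμ hA (B i) := by
          refine Finset.sum_congr rfl fun i _ => ?_
          by_cases hc : c i = 0
          · simp [hc]
          rw [traceMeasure_apply hμ hA (hC _ (hB i)), inter_eq_left.2]
          intro x hx
          by_contra hxA
          have h0 := hle x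
          rw [hsupp x hxA, nonpos_iff_eq_zero, Finset.sum_eq_zero_iff] at h0
          exact hc (by simpa [hx] using h0 i (Finset.mem_univ i))
      _ = ∫⁻ x, ∑ i, (B i).indicator (fun _ => c i) x ∂traceMeasure hμ hA := by
          rw [lintegral_finsetSum _ fun i _ => measurable_const.indicator (hC _ (hB i))]
          exact Finset.sum_congr rfl fun i _ => by rw [lintegral_indicator_const (hC _ (hB i))]
      _ ≤ _ := lintegral_mono hle
  · rw [lintegral_def]
    refine iSup_le fun g => iSup_le fun hg => ?_
    rw [SimpleFunc.lintegral]
    simp_rw [traceMeasure_apply hμ hA (g.measurableSet_fiber _)]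
    refine sum_le_lintSR g.range id (fun y => g ⁻¹' {y} ∩ A)
      (fun y => hA _ (g.measurableSet_fiber y)) fun x => ?_
    refine le_trans ?_ (hg x)
    rw [Finset.sum_eq_single_of_mem (g x) (g.mem_range_self x)]
    · exact indicator_le_self' (fun _ _ => zero_le) x
    · intro y _ hy
      exact indicator_of_notMem (fun hx => hy hx.1.symm) _

theorem mem_of_mem_sigmaFin {α : Type*} {C : Set (Set α)} {μ : Set α → ℝ≥0∞}
    (hC : IsSigmaRing C) {A : Set α} (hA : A ∈ sigmaFin C μ) : A ∈ C := by
  obtain ⟨g, hg, rfl⟩ := hA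
  exact hC.2.2 g fun n => (hg n).1

theorem iUnion_mem_sigmaFin {α : Type*} {C : Set (Set α)} {μ : Set α → ℝ≥0∞} {A : ℕ → Set α}
    (hA : ∀ n, A n ∈ sigmaFin C μ) : ⋃ n, A n ∈ sigmaFin C μ := by
  choose g hg hAg using hA
  refine ⟨fun k => g k.unpair.1 k.unpair.2, fun k => hg _ _, ?_⟩
  simp_rw [hAg]
  exact (iUnion_unpair g).symm

theorem mem_sigmaFin_of_lt_top {α : Type*} {C : Set (Set α)} {μ : Set α → ℝ≥0∞} {A : Set α}
    (hA : A ∈ C) (hfin : μ A < ⊤) : A ∈ sigmaFin C μ :=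
  ⟨fun _ => A, fun _ => ⟨hA, hfin⟩, (iUnion_const A).symm⟩

/-- The trace of a measure on a σ-finite set is spanned by measurable sets of finite measure. -/
theorem nonempty_finiteSpanningSetsIn_traceMeasure {α : Type*} [MeasurableSpace α]
    {C : Set (Set α)} {μ : Set α → ℝ≥0∞} (hμ : IsMeasure C μ) {A : Set α}
    (hA : ∀ E, MeasurableSet E → E ∩ A ∈ C) (hC : ∀ E ∈ C, MeasurableSet E)
    (hσ : A ∈ sigmaFin C μ) :
    Nonempty ((traceMeasure hμ hA).FiniteSpanningSetsIn
      {E | MeasurableSet E ∧ traceMeasure hμ hA E < ⊤}) := by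
  obtain ⟨g, hg, hAg⟩ := hσ
  have hgA : ∀ n, g n ⊆ A := fun n => hAg ▸ subset_iUnion g n
  have hmA : MeasurableSet A := hAg ▸ MeasurableSet.iUnion fun n => hC _ (hg n).1
  have hm : ∀ n, MeasurableSet (g n ∪ Aᶜ) := fun n => (hC _ (hg n).1).union hmA.compl
  have hfin : ∀ n, traceMeasure hμ hA (g n ∪ Aᶜ) < ⊤ := fun n => by
    rw [traceMeasure_apply hμ hA (hm n), union_inter_distrib_right, compl_inter_self, union_empty,
      inter_eq_left.2 (hgA n)]
    exact (hg n).2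
  refine ⟨⟨fun n => g n ∪ Aᶜ, fun n => ⟨hm n, hfin n⟩, hfin, ?_⟩⟩
  rw [← iUnion_union, ← hAg, union_compl_self]

theorem generateFrom_measurableSet_lt_top {α : Type*} {m : MeasurableSpace α} (M : Measure α)
    (h : M.FiniteSpanningSetsIn {E | MeasurableSet E ∧ M E < ⊤}) :
    MeasurableSpace.generateFrom {E | MeasurableSet E ∧ M E < ⊤} = m := by
  apply le_antisymm
  · exact MeasurableSpace.generateFrom_le fun _ hE => hE.1
  · intro E hE
    rw [← inter_univ E, ← h.spanning, inter_iUnion]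
    exact MeasurableSet.iUnion fun n => MeasurableSpace.measurableSet_generateFrom
      ⟨hE.inter (h.set_mem n).1, (measure_mono inter_subset_right).trans_lt (h.finite n)⟩

theorem isPiSystem_measurableSet_lt_top {α : Type*} {m : MeasurableSpace α} (M : Measure α) :
    IsPiSystem {E | MeasurableSet E ∧ M E < ⊤} :=
  fun _ hE _ hF _ => ⟨hE.1.inter hF.1, (measure_mono inter_subset_left).trans_lt hE.2⟩

theorem epos_eq_toENNReal (x : EReal) : epos x = x.toENNReal := by
  induction x with
  | bot => simp [epos]
  | top => simp [epos]
  | coe x =>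
    have : ((x : EReal) ⊔ 0) = ((x ⊔ 0 : ℝ) : EReal) := (EReal.coe_strictMono.monotone.map_max (a := x) (b := 0)).symm
    rw [epos, this, EReal.abs_def, EReal.toENNReal_of_ne_top (EReal.coe_ne_top x),
      abs_of_nonneg le_sup_right, EReal.toReal_coe]
    rcases le_total x 0 with h | h <;> simp [h, ENNReal.ofReal_of_nonpos]

theorem measurable_epos : Measurable epos := by
  simpa only [funext epos_eq_toENNReal] using measurable_ereal_toENNReal

theorem measurable_ereal_abs : Measurable EReal.abs :=
  EReal.measurable_of_measurable_real
    (ENNReal.measurable_ofReal.comp (measurable_norm (α := ℝ)))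

theorem epos_zero : epos 0 = 0 := by simp [epos]

theorem epos_le_abs (x : EReal) : epos x ≤ x.abs := by
  rcases le_total x 0 with h | h <;> simp [epos, h]

theorem epos_coe_sub_coe (p q : ℝ≥0∞) : epos ((p : EReal) - q) = p - q := by
  rw [epos_eq_toENNReal, EReal.toENNReal_sub (EReal.coe_ennreal_nonneg q)]
  simp

theorem epos_neg_coe_sub_coe {p q : ℝ≥0∞} (hp : p ≠ ⊤) :
    epos (-((p : EReal) - q)) = q - p := by
  rw [EReal.neg_sub (by simp) (by simp [hp]), add_comm, ← sub_eq_add_neg, epos_coe_sub_coe]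

/-- The integral of a difference of integrable nonnegative functions, computed through the
positive and negative parts of the difference. -/
theorem lintegral_epos_sub_lintegral_epos_neg {α : Type*} [MeasurableSpace α] {M : Measure α}
    {p q : α → ℝ≥0∞} (hp : Measurable p) (hq : Measurable q) (hpi : ∫⁻ x, p x ∂M ≠ ⊤)
    (hqi : ∫⁻ x, q x ∂M ≠ ⊤) :
    ((∫⁻ x, epos ((p x : EReal) - q x) ∂M : ℝ≥0∞) : EReal) -
        (∫⁻ x, epos (-((p x : EReal) - q x)) ∂M : ℝ≥0∞) =
      (∫⁻ x, p x ∂M : ℝ≥0∞) - (∫⁻ x, q x ∂M : ℝ≥0∞) := by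
  have hneg : ∫⁻ x, epos (-((p x : EReal) - q x)) ∂M = ∫⁻ x, q x - p x ∂M :=
    lintegral_congr_ae <| (ae_lt_top hp hpi).mono fun x hx => epos_neg_coe_sub_coe hx.ne
  simp_rw [hneg, epos_coe_sub_coe]
  have hadd : ∫⁻ x, p x - q x ∂M + ∫⁻ x, q x ∂M = ∫⁻ x, q x - p x ∂M + ∫⁻ x, p x ∂M := by
    rw [← lintegral_add_right _ hq, ← lintegral_add_right _ hp]
    refine lintegral_congr fun x => ?_
    rw [tsub_add_eq_max, tsub_add_eq_max, max_comm]
  have h₁ : ∫⁻ x, p x - q x ∂M ≠ ⊤ :=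
    ((lintegral_mono fun x => tsub_le_self).trans_lt hpi.lt_top).ne
  have h₂ : ∫⁻ x, q x - p x ∂M ≠ ⊤ :=
    ((lintegral_mono fun x => tsub_le_self).trans_lt hqi.lt_top).ne
  generalize ∫⁻ x, p x - q x ∂M = X at *
  generalize ∫⁻ x, q x - p x ∂M = Y at *
  generalize ∫⁻ x, p x ∂M = P at *
  generalize ∫⁻ x, q x ∂M = Q at *
  lift X to NNReal using h₁
  lift Y to NNReal using h₂
  lift P to NNReal using hpi
  lift Q to NNReal using hqi
  have hadd' : (X : ℝ) + Q = Y + P := by exact_mod_cast hadd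
  have hsub : (X : ℝ) - Y = P - Q := by linarith
  change ((X : ℝ) : EReal) - ((Y : ℝ) : EReal) = ((P : ℝ) : EReal) - ((Q : ℝ) : EReal)
  exact_mod_cast congrArg Real.toEReal hsub

/-- Fubini's theorem in one order of integration, for a function living on a rectangle
`A ×ˢ B`. -/
theorem fubini_of_support_subset_prod {α β : Type*} [mα : MeasurableSpace α]
    [mβ : MeasurableSpace β] {S : Set (Set α)} {T : Set (Set β)}
    {μ : Set α → ℝ≥0∞} {ν : Set β → ℝ≥0∞} (hμ : IsMeasure S μ) (hν : IsMeasure T ν)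
    (hSm : genSA S = mα) (hTm : genSA T = mβ) {A : Set α} {B : Set β}
    (hA : ∀ E, MeasurableSet E → E ∩ A ∈ S) (hB : ∀ E, MeasurableSet E → E ∩ B ∈ T)
    [SFinite (traceMeasure hν hB)] {f : α × β → EReal} (hf : Measurable f)
    (hsupp : ∀ z ∉ A ×ˢ B, f z = 0)
    (hfin : ∫⁻ z, (f z).abs ∂(traceMeasure hμ hA).prod (traceMeasure hν hB) < ⊤) :
    (∃ N ∈ S, μ N = 0 ∧ ∀ s ∉ N, IntegrableE T ν (fun t => f (s, t))) ∧
    ((∫⁻ z, epos (f z) ∂(traceMeasure hμ hA).prod (traceMeasure hν hB) : ℝ≥0∞) : EReal) -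
      (∫⁻ z, epos (-f z) ∂(traceMeasure hμ hA).prod (traceMeasure hν hB) : ℝ≥0∞) =
      integralE S μ (fun s => integralE T ν (fun t => f (s, t))) := by
  have hSC : ∀ E ∈ S, MeasurableSet E := fun E hE =>
    hSm ▸ MeasurableSpace.measurableSet_generateFrom hE
  have hTC : ∀ E ∈ T, MeasurableSet E := fun E hE =>
    hTm ▸ MeasurableSpace.measurableSet_generateFrom hE
  have hsuppA : ∀ s ∉ A, ∀ t, f (s, t) = 0 := fun s hs t => hsupp _ fun h => hs h.1
  have hsuppB : ∀ s, ∀ t ∉ B, f (s, t) = 0 := fun s t ht => hsupp _ fun h => ht h.2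
  have habs : Measurable fun z => (f z).abs := measurable_ereal_abs.comp hf
  have hpos : Measurable fun z => epos (f z) := measurable_epos.comp hf
  have hneg : Measurable fun z => epos (-f z) := measurable_epos.comp hf.neg
  have hinner : ∀ k : EReal → ℝ≥0∞, k 0 = 0 → ∀ s,
      lintSR T ν (fun t => k (f (s, t))) = ∫⁻ t, k (f (s, t)) ∂traceMeasure hν hB :=
    fun k hk s => lintSR_eq_lintegral hν hB hTC fun t ht => by rw [hsuppB s t ht, hk]
  have hposi : ∫⁻ z, epos (f z) ∂(traceMeasure hμ hA).prod (traceMeasure hν hB) ≠ ⊤ :=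
    ((lintegral_mono fun z => epos_le_abs _).trans_lt hfin).ne
  have hnegi : ∫⁻ z, epos (-f z) ∂(traceMeasure hμ hA).prod (traceMeasure hν hB) ≠ ⊤ :=
    ((lintegral_mono fun z => (epos_le_abs _).trans_eq (EReal.abs_neg _)).trans_lt hfin).ne
  refine ⟨?_, ?_⟩
  · let F : α → ℝ≥0∞ := fun s => ∫⁻ t, (f (s, t)).abs ∂traceMeasure hν hB
    have hF : Measurable F := habs.lintegral_prod_right'
    have hFfin : ∫⁻ s, F s ∂traceMeasure hμ hA ≠ ⊤ := by
      rw [lintegral_prod _ habs.aemeasurable] at hfin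
      exact hfin.ne
    have hN : MeasurableSet {s | F s = ⊤} := hF (measurableSet_singleton ⊤)
    refine ⟨{s | F s = ⊤} ∩ A, hA _ hN, ?_, fun s hs => ⟨⟨?_, ?_⟩, ?_⟩⟩
    · rw [← traceMeasure_apply hμ hA hN]
      exact measure_eq_top_of_lintegral_ne_top hF.aemeasurable hFfin
    · rw [hTm]
      exact hf.comp measurable_prodMk_left
    · have hm : MeasurableSet {t | f (s, t) ≠ 0} :=
        (hf.comp measurable_prodMk_left) (measurableSet_singleton 0).compl
      have := hB _ hm
      rwa [inter_eq_left.2] at this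
      intro t ht
      by_contra htB
      exact ht (hsuppB s t htB)
    · rw [hinner EReal.abs EReal.abs_zero s]
      by_cases hsA : s ∈ A
      · exact lt_top_iff_ne_top.2 fun h => hs ⟨h, hsA⟩
      · simp [hsuppA s hsA]
  · have hg : ∀ s, integralE T ν (fun t => f (s, t)) =
        ((∫⁻ t, epos (f (s, t)) ∂traceMeasure hν hB : ℝ≥0∞) : EReal) -
          (∫⁻ t, epos (-f (s, t)) ∂traceMeasure hν hB : ℝ≥0∞) := fun s => by
      rw [integralE, hinner epos epos_zero s,
        hinner (fun x => epos (-x)) (by simp [epos_zero]) s]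
    have hg0 : ∀ s ∉ A, integralE T ν (fun t => f (s, t)) = 0 := fun s hs => by
      rw [hg]
      simp [hsuppA s hs, epos_zero]
    rw [integralE, lintSR_eq_lintegral hμ hA hSC fun s hs => by rw [hg0 s hs, epos_zero],
      lintSR_eq_lintegral hμ hA hSC fun s hs => by rw [hg0 s hs, neg_zero, epos_zero]]
    simp_rw [hg]
    rw [lintegral_prod _ hpos.aemeasurable] at hposi ⊢
    rw [lintegral_prod _ hneg.aemeasurable] at hnegi ⊢
    exact (lintegral_epos_sub_lintegral_epos_neg hpos.lintegral_prod_right'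
      hneg.lintegral_prod_right' hposi hnegi).symm

/-- The support of an integrable function is σ-finite. -/
theorem IntegrableE.support_mem_sigmaFin {α : Type*} {C : Set (Set α)} {μ : Set α → ℝ≥0∞}
    (hC : IsSigmaRing C) {f : α → EReal} (hf : IntegrableE C μ f) :
    {x | f x ≠ 0} ∈ sigmaFin C μ := by
  obtain ⟨⟨hfm, hfs⟩, hfi⟩ := hf
  have habs := measurable_ereal_abs.comp hfm
  have hmem : ∀ n : ℕ, {x | ((n : ℝ≥0∞) + 1)⁻¹ ≤ (f x).abs} ∈ C := fun n => by
    have hm : MeasurableSet[genSA C] {x | ((n : ℝ≥0∞) + 1)⁻¹ ≤ (f x).abs} := habs measurableSet_Ici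
    have := hC.inter_mem_of_measurableSet hfs hm
    rwa [inter_eq_left.2] at this
    intro x hx h0
    simp [h0] at hx
  refine ⟨fun n => {x | ((n : ℝ≥0∞) + 1)⁻¹ ≤ (f x).abs}, fun n => ⟨hmem n, ?_⟩, ?_⟩
  · have hle := sum_le_lintSR (μ := μ) (h := fun x => (f x).abs) (Finset.univ : Finset Unit)
      (fun _ => ((n : ℝ≥0∞) + 1)⁻¹) (fun _ => {x | ((n : ℝ≥0∞) + 1)⁻¹ ≤ (f x).abs})
      (fun _ => hmem n) fun x => by
        simp only [Finset.univ_unique, Finset.sum_singleton]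
        exact indicator_le (fun _ hx => hx) x
    simp only [Finset.univ_unique, Finset.sum_singleton] at hle
    exact ENNReal.lt_top_of_mul_ne_top_right (hle.trans_lt hfi).ne (by simp)
  · ext x
    simp only [mem_ofPred_eq, mem_iUnion]
    constructor
    · intro hx
      obtain ⟨n, hn⟩ := ENNReal.exists_inv_nat_lt (mt EReal.abs_eq_zero_iff.1 hx)
      exact ⟨n, (ENNReal.inv_le_inv.2 le_self_add).trans hn.le⟩
    · rintro ⟨n, hn⟩ h0
      simp [h0] at hn

theorem IsProdMeasure.exists_subset_prod {α β : Type*} {S : Set (Set α)} {T : Set (Set β)}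
    {μ : Set α → ℝ≥0∞} {ν : Set β → ℝ≥0∞} (hS : IsSigmaRing S) (hT : IsSigmaRing T)
    (hμ : IsMeasure S μ) (hν : IsMeasure T ν) {lam : Set (α × β) → ℝ≥0∞}
    (hlam : IsProdMeasure S T μ ν lam) {E : Set (α × β)} (hE : E ∈ sigmaFin (prodSR S T) lam) :
    ∃ A ∈ sigmaFin S μ, ∃ B ∈ sigmaFin T ν, E ⊆ A ×ˢ B := by
  rw [hlam.2.2] at hE
  refine hE {E | ∃ A ∈ sigmaFin S μ, ∃ B ∈ sigmaFin T ν, E ⊆ A ×ˢ B} ⟨⟨?_, ?_, ?_⟩, ?_⟩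
  · exact ⟨∅, mem_sigmaFin_of_lt_top hS.1 (by simp [hμ.1]), ∅,
      mem_sigmaFin_of_lt_top hT.1 (by simp [hν.1]), empty_subset _⟩
  · rintro E F ⟨A, hA, B, hB, h⟩ -
    exact ⟨A, hA, B, hB, sdiff_subset.trans h⟩
  · intro f hf
    choose A hA B hB h using hf
    exact ⟨_, iUnion_mem_sigmaFin hA, _, iUnion_mem_sigmaFin hB, iUnion_subset fun n =>
      (h n).trans (prod_mono (subset_iUnion A n) (subset_iUnion B n))⟩
  · rintro _ ⟨A, hA, B, hB, hAf, hBf, rfl⟩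
    exact ⟨A, mem_sigmaFin_of_lt_top hA hAf, B, mem_sigmaFin_of_lt_top hB hBf, subset_rfl⟩

/-- Fubini: for a function integrable with respect to the product
of arbitrary measures, almost all sections are integrable and the integral
equals both iterated integrals. -/
theorem stmt_17 {α β : Type*} (S : Set (Set α)) (T : Set (Set β))
    (μ : Set α → ℝ≥0∞) (ν : Set β → ℝ≥0∞)
    (hS : IsSigmaRing S) (hT : IsSigmaRing T)
    (hμ : IsMeasure S μ) (hν : IsMeasure T ν)
    (lam : Set (α × β) → ℝ≥0∞) (hlam : IsProdMeasure S T μ ν lam)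
    (f : α × β → EReal) (hf : IntegrableE (prodSR S T) lam f) :
    (∃ N ∈ S, μ N = 0 ∧ ∀ s ∉ N, IntegrableE T ν (fun t => f (s, t))) ∧
    (∃ N ∈ T, ν N = 0 ∧ ∀ t ∉ N, IntegrableE S μ (fun s => f (s, t))) ∧
    integralE (prodSR S T) lam f =
      integralE S μ (fun s => integralE T ν (fun t => f (s, t))) ∧
    integralE (prodSR S T) lam f =
      integralE T ν (fun t => integralE S μ (fun s => f (s, t))) := by
  let _ := genSA S
  let _ := genSA T
  obtain ⟨A, hAσ, B, hBσ, hsub⟩ := hlam.exists_subset_prod hS hT hμ hν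
    (hf.support_mem_sigmaFin (isSigmaRing_genSR _))
  have hAS := mem_of_mem_sigmaFin hS hAσ
  have hBT := mem_of_mem_sigmaFin hT hBσ
  have hSC : ∀ E ∈ S, MeasurableSet E := fun E hE => MeasurableSpace.measurableSet_generateFrom hE
  have hTC : ∀ E ∈ T, MeasurableSet E := fun E hE => MeasurableSpace.measurableSet_generateFrom hE
  have hA : ∀ E, MeasurableSet E → E ∩ A ∈ S := fun E => hS.inter_mem_of_measurableSet hAS
  have hB : ∀ E, MeasurableSet E → E ∩ B ∈ T := fun E => hT.inter_mem_of_measurableSet hBT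
  have hAB : ∀ E, MeasurableSet E → E ∩ A ×ˢ B ∈ prodSR S T := fun E =>
    inter_prod_mem_prodSR hS hT hAS hBT
  obtain ⟨spanA⟩ := nonempty_finiteSpanningSetsIn_traceMeasure hμ hA hSC hAσ
  obtain ⟨spanB⟩ := nonempty_finiteSpanningSetsIn_traceMeasure hν hB hTC hBσ
  have : SigmaFinite (traceMeasure hμ hA) := spanA.sigmaFinite
  have : SigmaFinite (traceMeasure hν hB) := spanB.sigmaFinite
  have hprod : (traceMeasure hμ hA).prod (traceMeasure hν hB) = traceMeasure hlam.1 hAB := by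
    refine Measure.prod_eq_generateFrom (generateFrom_measurableSet_lt_top _ spanA)
      (generateFrom_measurableSet_lt_top _ spanB) (isPiSystem_measurableSet_lt_top _)
      (isPiSystem_measurableSet_lt_top _) spanA spanB ?_
    rintro s ⟨hs, hsf⟩ t ⟨ht, htf⟩
    rw [traceMeasure_apply hμ hA hs] at hsf ⊢
    rw [traceMeasure_apply hν hB ht] at htf ⊢
    rw [traceMeasure_apply hlam.1 hAB (hs.prod ht), prod_inter_prod]
    exact hlam.2.1 _ (hA s hs) _ (hB t ht) hsf htf
  have hfm : Measurable f := hf.1.1.mono (genSA_prodSR_le S T) le_rfl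
  have hsupp : ∀ z ∉ A ×ˢ B, f z = 0 := fun z hz => by
    by_contra h
    exact hz (hsub h)
  have hlint : ∀ k : EReal → ℝ≥0∞, k 0 = 0 → lintSR (prodSR S T) lam (fun z => k (f z)) =
      ∫⁻ z, k (f z) ∂(traceMeasure hμ hA).prod (traceMeasure hν hB) := fun k hk => by
    rw [hprod]
    exact lintSR_eq_lintegral hlam.1 hAB (fun E => measurableSet_prod_of_mem_prodSR)
      fun z hz => by rw [hsupp z hz, hk]
  have hswap : ∀ k : EReal → ℝ≥0∞,
      ∫⁻ z, k (f z.swap) ∂(traceMeasure hν hB).prod (traceMeasure hμ hA) =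
      ∫⁻ z, k (f z) ∂(traceMeasure hμ hA).prod (traceMeasure hν hB) := fun k =>
    lintegral_prod_swap (fun z => k (f z))
  have hfin := hf.2
  rw [hlint _ EReal.abs_zero] at hfin
  obtain ⟨hN₁, hI₁⟩ := fubini_of_support_subset_prod hμ hν rfl rfl hA hB hfm hsupp hfin
  obtain ⟨hN₂, hI₂⟩ := fubini_of_support_subset_prod hν hμ rfl rfl hB hA
    (hfm.comp measurable_swap) (fun z hz => hsupp _ fun h => hz ⟨h.2, h.1⟩)
    ((hswap EReal.abs).trans_lt hfin)
  have hI : integralE (prodSR S T) lam f =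
      ((∫⁻ z, epos (f z) ∂(traceMeasure hμ hA).prod (traceMeasure hν hB) : ℝ≥0∞) : EReal) -
      (∫⁻ z, epos (-f z) ∂(traceMeasure hμ hA).prod (traceMeasure hν hB) : ℝ≥0∞) := by
    rw [integralE, hlint epos epos_zero, hlint (fun x => epos (-x)) (by simp [epos_zero])]
  refine ⟨hN₁, hN₂, hI.trans hI₁, hI.trans ?_⟩
  rw [← hswap epos, ← hswap fun x => epos (-x)]
  exact hI₂
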